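/- arXiv:2011.08821 — 4 statements merged into one kernel-verified Lean document; each statement's English description precedes it below -/
import Mathlib

section
/- Let (u,ρ) be a solution of the nonlocal form of the CH2 system on [0,T)×ℝ that conserves the Hamiltonian H, and suppose the initial data is non-trivial, i.e. x ↦ u(0,x) and x ↦ ρ(0,x) are not both identically zero. Then there is no non-empty open rectangle (t₀,t₁)×(x₀,x₁) ⊆ [0,T)×ℝ on which u and ρ both vanish identically. -/
open MeasureTheory

/-!
Fix a time `t` inside the rectangle. There `u`, `u_x`, `ρ` and `u_t` vanish on `(x₀, x₁)`, so the
source `f_t = u² + u_x² / 2 + ρ² / 2` vanishes on that interval and, by the momentum equation, so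
does the force `F_t`. The kernel `-(1/2) sgn(x) e^{-|x|}` is strictly increasing on each side of its
jump at `0`, and for `y ∉ [a, b]` the points `a - y` and `b - y` lie on the same side of the jump.
Hence for `a < b` in `(x₀, x₁)` every bit of the nonnegative source outside `[a, b]` contributes
strictly positively to `F_t(b) - F_t(a) = 0`. The source is therefore identically zero, the
Hamiltonian vanishes at time `t`, by conservation it also vanishes initially, and so do the data.
-/

section JumpKernel

variable {μ : Measure ℝ} {K g : ℝ → ℝ} {a b : ℝ}

lemma kernel_sub_lt_kernel_sub (hK_neg : StrictMonoOn K (Set.Iio 0))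
    (hK_pos : StrictMonoOn K (Set.Ioi 0)) (hab : a < b) {y : ℝ} (hy : y ∉ Set.Icc a b) :
    K (a - y) < K (b - y) := by
  rcases lt_or_ge y a with hya | hay
  · exact hK_pos (sub_pos.2 hya) (sub_pos.2 (hya.trans hab)) (by linarith)
  · have hby : b < y := lt_of_not_ge fun hyb => hy ⟨hay, hyb⟩
    exact hK_neg (sub_neg.2 (hab.trans hby)) (sub_neg.2 hby) (by linarith)

lemma ae_eq_zero_of_integral_kernel_eq (hK_neg : StrictMonoOn K (Set.Iio 0))
    (hK_pos : StrictMonoOn K (Set.Ioi 0))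
    (hKa : Integrable (fun y => K (a - y) * g y) μ) (hKb : Integrable (fun y => K (b - y) * g y) μ)
    (hg_nonneg : 0 ≤ g) (hab : a < b) (hg_zero : Set.EqOn g 0 (Set.Icc a b))
    (h : ∫ y, K (a - y) * g y ∂μ = ∫ y, K (b - y) * g y ∂μ) : g =ᵐ[μ] 0 := by
  have hle : ∀ y, K (a - y) * g y ≤ K (b - y) * g y := fun y => by
    by_cases hy : y ∈ Set.Icc a b
    · simp [hg_zero hy]
    · exact mul_le_mul_of_nonneg_right (kernel_sub_lt_kernel_sub hK_neg hK_pos hab hy).le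
        (hg_nonneg y)
  have hae := (integral_eq_iff_of_ae_le hKa hKb (.of_forall hle)).1 h
  filter_upwards [hae] with y hKy
  by_cases hy : y ∈ Set.Icc a b
  · exact hg_zero hy
  · exact (mul_eq_mul_right_iff.1 hKy).resolve_left
      (kernel_sub_lt_kernel_sub hK_neg hK_pos hab hy).ne

end JumpKernel

/-- The convolution kernel of the nonlocal form: the derivative of the Green's function
`e^{-|x|} / 2` of `1 - ∂ₓ²`, with value `0` at the jump `x = 0`. -/
noncomputable def ch2Kernel (x : ℝ) : ℝ :=
  -(1/2) * Real.sign x * Real.exp (-|x|)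

/-- The nonlocal force `F` generated by a source density `g`, that is, the convolution of
`ch2Kernel` with `g`. -/
noncomputable def ch2Force (g : ℝ → ℝ) (x : ℝ) : ℝ :=
  ∫ y, ch2Kernel (x - y) * g y

/-- The source density `f` of the nonlocal form at one instant, `v` and `r` being the functions
`u(t, ·)` and `ρ(t, ·)`. -/
noncomputable def ch2Source (v r : ℝ → ℝ) (x : ℝ) : ℝ :=
  (v x) ^ 2 + (1/2) * (deriv v x) ^ 2 + (1/2) * (r x) ^ 2

/-- The Hamiltonian of the CH2 system at one instant, `v` and `r` being the functions `u(t, ·)` and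
`ρ(t, ·)`. The integral is a Bochner integral, so this is `0` when the integrand is not
integrable. -/
noncomputable def ch2Hamiltonian (v r : ℝ → ℝ) : ℝ :=
  (1/2) * ∫ x, ((v x) ^ 2 + (deriv v x) ^ 2 + (r x) ^ 2)

section Kernel

variable {μ : Measure ℝ} {g : ℝ → ℝ} {a b : ℝ}

lemma strictMonoOn_ch2Kernel_Iio : StrictMonoOn ch2Kernel (Set.Iio 0) := by
  intro x (hx : x < 0) y (hy : y < 0) hxy
  have hexp : Real.exp x < Real.exp y := Real.exp_lt_exp.2 hxy
  simp only [ch2Kernel, Real.sign_of_neg, abs_of_neg, hx, hy, neg_neg]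
  linarith

lemma strictMonoOn_ch2Kernel_Ioi : StrictMonoOn ch2Kernel (Set.Ioi 0) := by
  intro x (hx : 0 < x) y (hy : 0 < y) hxy
  have hexp : Real.exp (-y) < Real.exp (-x) := Real.exp_lt_exp.2 (neg_lt_neg hxy)
  simp only [ch2Kernel, Real.sign_of_pos, abs_of_pos, hx, hy]
  linarith

lemma measurable_ch2Kernel : Measurable ch2Kernel := by
  have hsign : Measurable Real.sign :=
    Measurable.ite measurableSet_Iio measurable_const
      (Measurable.ite measurableSet_Ioi measurable_const measurable_const)
  unfold ch2Kernel
  fun_prop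

lemma abs_ch2Kernel_le (x : ℝ) : |ch2Kernel x| ≤ 1/2 := by
  have hsign : |Real.sign x| ≤ 1 := by
    rcases Real.sign_apply_eq x with h | h | h <;> simp [h]
  have hexp : Real.exp (-|x|) ≤ 1 := Real.exp_le_one_iff.2 (neg_nonpos.2 (abs_nonneg x))
  calc |ch2Kernel x| = 1/2 * (|Real.sign x| * Real.exp (-|x|)) := by
        simp [ch2Kernel, abs_mul, mul_assoc]
    _ ≤ 1/2 * (1 * 1) := by gcongr
    _ = 1/2 := by norm_num

lemma integrable_ch2Kernel_sub_mul (hg : Integrable g μ) (x : ℝ) :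
    Integrable (fun y => ch2Kernel (x - y) * g y) μ :=
  hg.bdd_mul (measurable_ch2Kernel.comp (measurable_const.sub measurable_id)).aestronglyMeasurable
    (.of_forall fun y => abs_ch2Kernel_le (x - y))

theorem eq_zero_of_ch2Force_eq (hg : Integrable g) (hg_cont : Continuous g) (hg_nonneg : 0 ≤ g)
    (hab : a < b) (hg_zero : Set.EqOn g 0 (Set.Icc a b)) (hF : ch2Force g a = ch2Force g b) :
    g = 0 :=
  (hg_cont.ae_eq_iff_eq volume continuous_zero).1 <|
    ae_eq_zero_of_integral_kernel_eq strictMonoOn_ch2Kernel_Iio strictMonoOn_ch2Kernel_Ioi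
      (integrable_ch2Kernel_sub_mul hg a) (integrable_ch2Kernel_sub_mul hg b) hg_nonneg hab
      hg_zero hF

end Kernel

section Slice

variable {v r : ℝ → ℝ}

lemma ch2Source_nonneg (v r : ℝ → ℝ) : 0 ≤ ch2Source v r := fun x => by
  simp only [Pi.zero_apply, ch2Source]
  positivity

lemma continuous_ch2Source (hv : ContDiff ℝ 1 v) (hr : Continuous r) :
    Continuous (ch2Source v r) := by
  unfold ch2Source
  fun_prop

lemma integrable_ch2Source (hv : Integrable fun x => (v x) ^ 2)
    (hv' : Integrable fun x => (deriv v x) ^ 2) (hr : Integrable fun x => (r x) ^ 2) :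
    Integrable (ch2Source v r) :=
  (hv.add (hv'.const_mul (1/2))).add (hr.const_mul (1/2))

lemma ch2Source_apply_eq_zero_iff {x : ℝ} :
    ch2Source v r x = 0 ↔ v x = 0 ∧ deriv v x = 0 ∧ r x = 0 := by
  refine ⟨fun h => ?_, fun ⟨hv, hv', hr⟩ => by simp [ch2Source, hv, hv', hr]⟩
  rw [ch2Source, add_eq_zero_iff_of_nonneg (by positivity) (by positivity),
    add_eq_zero_iff_of_nonneg (by positivity) (by positivity)] at h
  simpa [and_assoc] using h

lemma ch2Source_eqOn_zero {s : Set ℝ} (hs : IsOpen s) (hv : Set.EqOn v 0 s)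
    (hr : Set.EqOn r 0 s) : Set.EqOn (ch2Source v r) 0 s := fun x hx => by
  have hv' : deriv v x = 0 := by simpa using hv.deriv hs hx
  exact ch2Source_apply_eq_zero_iff.2 ⟨hv hx, hv', hr hx⟩

lemma eq_zero_of_ch2Source_eq_zero (h : ch2Source v r = 0) : v = 0 ∧ r = 0 :=
  have hx (x : ℝ) := ch2Source_apply_eq_zero_iff.1 (congrFun h x)
  ⟨funext fun x => (hx x).1, funext fun x => (hx x).2.2⟩

theorem ch2Hamiltonian_eq_zero_iff (hv : ContDiff ℝ 1 v) (hr : Continuous r)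
    (hv_L2 : Integrable fun x => (v x) ^ 2) (hv'_L2 : Integrable fun x => (deriv v x) ^ 2)
    (hr_L2 : Integrable fun x => (r x) ^ 2) : ch2Hamiltonian v r = 0 ↔ v = 0 ∧ r = 0 := by
  refine ⟨fun h => ?_, fun ⟨hv, hr⟩ => by simp [ch2Hamiltonian, hv, hr]⟩
  have hnonneg (x : ℝ) : 0 ≤ (v x) ^ 2 + (deriv v x) ^ 2 + (r x) ^ 2 := by positivity
  have hint : ∫ x, ((v x) ^ 2 + (deriv v x) ^ 2 + (r x) ^ 2) = 0 := by
    simpa [ch2Hamiltonian] using h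
  have henergy : (fun x => (v x) ^ 2 + (deriv v x) ^ 2 + (r x) ^ 2) =ᵐ[volume] 0 :=
    (integral_eq_zero_iff_of_nonneg hnonneg ((hv_L2.add hv'_L2).add hr_L2)).1 hint
  have hsource : ch2Source v r =ᵐ[volume] 0 := by
    filter_upwards [henergy] with x hx
    have hle : ch2Source v r x ≤ (v x) ^ 2 + (deriv v x) ^ 2 + (r x) ^ 2 := by
      unfold ch2Source
      linarith [sq_nonneg (deriv v x), sq_nonneg (r x)]
    exact le_antisymm (hle.trans_eq hx) (ch2Source_nonneg v r x)
  exact eq_zero_of_ch2Source_eq_zero <|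
    ((continuous_ch2Source hv hr).ae_eq_iff_eq volume continuous_zero).1 hsource

theorem eq_zero_of_eqOn_zero_of_ch2Force_eq {a b : ℝ} (hv : ContDiff ℝ 1 v) (hr : Continuous r)
    (hf : Integrable (ch2Source v r)) (hab : a < b) (hv_zero : Set.EqOn v 0 (Set.Ioo a b))
    (hr_zero : Set.EqOn r 0 (Set.Ioo a b))
    (hF : ch2Force (ch2Source v r) a = ch2Force (ch2Source v r) b) : v = 0 ∧ r = 0 := by
  have hf_cont := continuous_ch2Source hv hr
  have hf_zero : Set.EqOn (ch2Source v r) 0 (Set.Icc a b) :=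
    closure_Ioo hab.ne ▸
      (ch2Source_eqOn_zero isOpen_Ioo hv_zero hr_zero).closure hf_cont continuous_zero
  exact eq_zero_of_ch2Source_eq_zero
    (eq_zero_of_ch2Force_eq hf hf_cont (ch2Source_nonneg v r) hab hf_zero hF)

end Slice

theorem ch2_no_vanishing_rectangle_general {J : Set ℝ} {u ρ : ℝ → ℝ → ℝ}
    (hu_reg : ∀ t ∈ J, ContDiff ℝ 1 (u t))
    (hρ_reg : ∀ t ∈ J, Continuous (ρ t))
    (hu_L2 : ∀ t ∈ J, Integrable (fun x => (u t x) ^ 2))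
    (hux_L2 : ∀ t ∈ J, Integrable (fun x => (deriv (u t) x) ^ 2))
    (hρ_L2 : ∀ t ∈ J, Integrable (fun x => (ρ t x) ^ 2))
    (hmomentum : ∀ t ∈ J, ∀ x : ℝ, HasDerivWithinAt (fun τ => u τ x)
      (-ch2Force (ch2Source (u t) (ρ t)) x - u t x * deriv (u t) x) J t)
    {s : ℝ} (hs : s ∈ J)
    (hcons : ∀ t ∈ J, ch2Hamiltonian (u t) (ρ t) = ch2Hamiltonian (u s) (ρ s))
    (hnontrivial : ¬ (∀ x : ℝ, u s x = 0 ∧ ρ s x = 0)) :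
    ¬ ∃ t₀ t₁ x₀ x₁ : ℝ, t₀ < t₁ ∧ x₀ < x₁ ∧ Set.Ioo t₀ t₁ ⊆ J ∧
      ∀ t ∈ Set.Ioo t₀ t₁, ∀ x ∈ Set.Ioo x₀ x₁, u t x = 0 ∧ ρ t x = 0 := by
  rintro ⟨t₀, t₁, x₀, x₁, ht₀₁, hx₀₁, hJ, hvanish⟩
  obtain ⟨t, ht⟩ : (Set.Ioo t₀ t₁).Nonempty := Set.nonempty_Ioo.2 ht₀₁
  obtain ⟨a, hx₀a, hax₁⟩ := exists_between hx₀₁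
  obtain ⟨b, hab, hbx₁⟩ := exists_between hax₁
  have hnhds : Set.Ioo t₀ t₁ ∈ nhds t := isOpen_Ioo.mem_nhds ht
  have hforce : ∀ x ∈ Set.Ioo x₀ x₁, ch2Force (ch2Source (u t) (ρ t)) x = 0 := fun x hx => by
    have hrest : HasDerivAt (fun τ => u τ x) 0 t :=
      (hasDerivAt_const t 0).congr_of_eventuallyEq <| by
        filter_upwards [hnhds] with τ hτ using (hvanish τ hτ x hx).1
    have hdyn := (hmomentum t (hJ ht) x).hasDerivAt (Filter.mem_of_superset hnhds hJ)
    simpa [(hvanish t ht x hx).1] using hdyn.unique hrest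
  have hsub : Set.Ioo a b ⊆ Set.Ioo x₀ x₁ := Set.Ioo_subset_Ioo hx₀a.le hbx₁.le
  have hslice : u t = 0 ∧ ρ t = 0 :=
    eq_zero_of_eqOn_zero_of_ch2Force_eq (hu_reg t (hJ ht)) (hρ_reg t (hJ ht))
      (integrable_ch2Source (hu_L2 t (hJ ht)) (hux_L2 t (hJ ht)) (hρ_L2 t (hJ ht))) hab
      (fun x hx => (hvanish t ht x (hsub hx)).1) (fun x hx => (hvanish t ht x (hsub hx)).2)
      ((hforce a ⟨hx₀a, hax₁⟩).trans (hforce b ⟨hx₀a.trans hab, hbx₁⟩).symm)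
  have energy_eq_zero_iff (τ : ℝ) (hτ : τ ∈ J) :
      ch2Hamiltonian (u τ) (ρ τ) = 0 ↔ u τ = 0 ∧ ρ τ = 0 :=
    ch2Hamiltonian_eq_zero_iff (hu_reg τ hτ) (hρ_reg τ hτ) (hu_L2 τ hτ) (hux_L2 τ hτ) (hρ_L2 τ hτ)
  obtain ⟨hu, hρ⟩ := (energy_eq_zero_iff s hs).1 <|
    (hcons t (hJ ht)).symm.trans ((energy_eq_zero_iff t (hJ ht)).2 hslice)
  exact hnontrivial fun x => ⟨congrFun hu x, congrFun hρ x⟩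

/-- **Corollary 2.1 (non-periodic case).** If the initial data of a solution of the nonlocal
form of the CH2 system conserving the Hamiltonian is non-trivial, then there is no non-empty
open rectangle `(t₀,t₁) × (x₀,x₁) ⊆ [0,T) × ℝ` on which `u` and `ρ` both vanish identically. -/
theorem ch2_no_vanishing_rectangle
    (T : ℝ) (hT : 0 < T)
    (u ρ : ℝ → ℝ → ℝ)
    (hu_reg : ∀ t ∈ Set.Ico (0:ℝ) T, ContDiff ℝ 2 (u t))
    (hρ_reg : ∀ t ∈ Set.Ico (0:ℝ) T, ContDiff ℝ 1 (ρ t))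
    (hu_t : ∀ t ∈ Set.Ico (0:ℝ) T, ∀ x : ℝ, DifferentiableAt ℝ (fun s => u s x) t)
    (hρ_t : ∀ t ∈ Set.Ico (0:ℝ) T, ∀ x : ℝ, DifferentiableAt ℝ (fun s => ρ s x) t)
    (hu_L2 : ∀ t ∈ Set.Ico (0:ℝ) T, Integrable (fun x => (u t x)^2))
    (hux_L2 : ∀ t ∈ Set.Ico (0:ℝ) T, Integrable (fun x => (deriv (u t) x)^2))
    (hρ_L2 : ∀ t ∈ Set.Ico (0:ℝ) T, Integrable (fun x => (ρ t x)^2))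
    (f : ℝ → ℝ → ℝ)
    (hf : ∀ t x, f t x = (u t x)^2 + (1/2) * (deriv (u t) x)^2 + (1/2) * (ρ t x)^2)
    (hf_int : ∀ t ∈ Set.Ico (0:ℝ) T, Integrable (f t))
    (F : ℝ → ℝ → ℝ)
    (hF : ∀ t x, F t x = ∫ y, (-(1/2) * Real.sign (x - y) * Real.exp (-|x - y|)) * f t y)
    (heq1 : ∀ t ∈ Set.Ico (0:ℝ) T, ∀ x : ℝ,
      deriv (fun s => u s x) t + u t x * deriv (u t) x = -F t x)
    (heq2 : ∀ t ∈ Set.Ico (0:ℝ) T, ∀ x : ℝ,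
      deriv (fun s => ρ s x) t + deriv (u t) x * ρ t x + u t x * deriv (ρ t) x = 0)
    (H : ℝ → ℝ)
    (hH : ∀ t, H t = (1/2) * ∫ x, ((u t x)^2 + (deriv (u t) x)^2 + (ρ t x)^2))
    (hcons : ∀ t ∈ Set.Ico (0:ℝ) T, H t = H 0)
    (hnontrivial : ¬ (∀ x : ℝ, u 0 x = 0 ∧ ρ 0 x = 0)) :
    ¬ ∃ t₀ t₁ x₀ x₁ : ℝ, t₀ < t₁ ∧ x₀ < x₁ ∧ Set.Ioo t₀ t₁ ⊆ Set.Ico (0:ℝ) T ∧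
      ∀ t ∈ Set.Ioo t₀ t₁, ∀ x ∈ Set.Ioo x₀ x₁, u t x = 0 ∧ ρ t x = 0 := by
  obtain rfl : f = fun t => ch2Source (u t) (ρ t) := funext₂ hf
  obtain rfl : F = fun t => ch2Force (ch2Source (u t) (ρ t)) := funext₂ hF
  obtain rfl : H = fun t => ch2Hamiltonian (u t) (ρ t) := funext hH
  exact ch2_no_vanishing_rectangle_general (fun t ht => (hu_reg t ht).of_le one_le_two)
    (fun t ht => (hρ_reg t ht).continuous) hu_L2 hux_L2 hρ_L2
    (fun t ht x => ((hu_t t ht x).hasDerivAt.congr_deriv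
      (eq_sub_of_add_eq (heq1 t ht x))).hasDerivWithinAt)
    ⟨le_rfl, hT⟩ hcons hnontrivial
end

section
/- Let a, b ∈ ℝ with 0 ≤ a < b < 1, and define S_{a,b} : ℝ → ℝ by S_{a,b}(y) := [sinh(b−y−⌊b−y⌋−1/2) − sinh(a−y−⌊a−y⌋−1/2)]/(2·sinh(1/2)). Then S_{a,b}(y) > 0 for all y ∈ [0,1) \ [a,b], and for every continuous, non-negative, 1-periodic f : ℝ → ℝ, writing F(x) := ∫_{[0,1)} g'(x−y) f(y) dy with g'(z) := sinh(z−⌊z⌋−1/2)/(2·sinh(1/2)) for z ∉ ℤ and g'(z) := 0 for z ∈ ℤ, one has F(b) − F(a) = ∫_{[0,1)} S_{a,b}(y) f(y) dy. -/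
open MeasureTheory

/-!
Write `k z = sinh (fract z - 1/2) / (2 sinh (1/2))`. Since `k` is strictly increasing in
`fract z`, the sign of `S y = k (b - y) - k (a - y)` is read off fractional parts: passing from
`a - y` to `b - y` increases the fractional part as long as no integer is crossed, that is, as long
as no integer translate of `y` lies in `(a, b]`. The integral formula is linearity of the integral
applied to the bounded kernel `k`, from which `g'` differs only on the null set `ℤ`.
-/

section FloorRing

variable {α : Type*} [Ring α] [LinearOrder α] [IsStrictOrderedRing α] [FloorRing α]

lemma fract_lt_fract_of_forall_intCast_notMem_Ioc {s t : α} (hst : s < t)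
    (h : ∀ n : ℤ, (n : α) ∉ Set.Ioc s t) : Int.fract s < Int.fract t := by
  have floor_eq : ⌊s⌋ = ⌊t⌋ := by
    refine (Int.floor_mono hst.le).antisymm (Int.le_floor.2 (not_lt.1 fun hs => ?_))
    exact h ⌊t⌋ ⟨hs, Int.floor_le t⟩
  rw [Int.fract, Int.fract, floor_eq]
  exact sub_lt_sub_right hst _

lemma eq_zero_of_add_intCast_mem_Ico {y : α} {n : ℤ} (hy : y ∈ Set.Ico 0 1)
    (hyn : y + n ∈ Set.Ico 0 1) : n = 0 := by
  have floor_add : ⌊y⌋ + n = 0 := by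
    rw [← Int.floor_add_intCast, Int.floor_eq_zero_iff.2 hyn]
  rwa [Int.floor_eq_zero_iff.2 hy, zero_add] at floor_add

lemma add_intCast_notMem_Ioc {a b y : α} (ha : 0 ≤ a) (hb : b < 1) (hy : y ∈ Set.Ico 0 1)
    (hyab : y ∉ Set.Ioc a b) (n : ℤ) : y + n ∉ Set.Ioc a b := by
  intro hyn
  obtain rfl : n = 0 :=
    eq_zero_of_add_intCast_mem_Ico hy ⟨ha.trans hyn.1.le, hyn.2.trans_lt hb⟩
  exact hyab (by simpa only [Int.cast_zero, add_zero] using hyn)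

end FloorRing

lemma ae_forall_sub_ne_intCast (μ : Measure ℝ) [NullSingletonClass μ] (x : ℝ) :
    ∀ᵐ y ∂μ, ∀ n : ℤ, x - y ≠ n := by
  refine ae_all_iff.2 fun n => ?_
  filter_upwards [Measure.ae_ne μ (x - n)] with y hy hxy
  exact hy (by rw [← hxy, sub_sub_cancel])

lemma integral_sub_mul_congr_off_intCast {μ : Measure ℝ} [NullSingletonClass μ] {k l : ℝ → ℝ}
    (hkl : ∀ z : ℝ, (∀ n : ℤ, z ≠ n) → k z = l z) (f : ℝ → ℝ) (x : ℝ) :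
    ∫ y, k (x - y) * f y ∂μ = ∫ y, l (x - y) * f y ∂μ := by
  refine integral_congr_ae ?_
  filter_upwards [ae_forall_sub_ne_intCast μ x] with y hy
  rw [hkl _ hy]

/-- The derivative of the Green function `cosh (fract z - 1/2) / (2 sinh (1/2))` of the Helmholtz
operator `1 - ∂ₓ²` on the circle `ℝ / ℤ`. At the integers, where that derivative does not exist, the
formula gives its limit from the right, `-1/2`. -/
noncomputable def circleGreenDeriv (z : ℝ) : ℝ :=
  Real.sinh (Int.fract z - 1 / 2) / (2 * Real.sinh (1 / 2))

lemma two_mul_sinh_half_pos : 0 < 2 * Real.sinh (1 / 2) :=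
  mul_pos two_pos (Real.sinh_pos_iff.2 one_half_pos)

lemma circleGreenDeriv_lt_circleGreenDeriv_iff {s t : ℝ} :
    circleGreenDeriv s < circleGreenDeriv t ↔ Int.fract s < Int.fract t := by
  rw [circleGreenDeriv, circleGreenDeriv, div_lt_div_iff_of_pos_right two_mul_sinh_half_pos,
    Real.sinh_lt_sinh, sub_lt_sub_iff_right]

lemma circleGreenDeriv_sub_lt_circleGreenDeriv_sub {a b y : ℝ} (hab : a < b)
    (hy : ∀ n : ℤ, y + n ∉ Set.Ioc a b) :
    circleGreenDeriv (a - y) < circleGreenDeriv (b - y) := by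
  refine circleGreenDeriv_lt_circleGreenDeriv_iff.2
    (fract_lt_fract_of_forall_intCast_notMem_Ioc (sub_lt_sub_right hab y) fun n hn => hy n ?_)
  exact ⟨sub_lt_iff_lt_add'.1 hn.1, le_sub_iff_add_le'.1 hn.2⟩

lemma abs_circleGreenDeriv_le (z : ℝ) : |circleGreenDeriv z| ≤ 1 / 2 := by
  have abs_fract_sub_half_le : |Int.fract z - 1 / 2| ≤ 1 / 2 :=
    abs_le.2 ⟨by linarith [Int.fract_nonneg z], by linarith [Int.fract_lt_one z]⟩
  rw [circleGreenDeriv, abs_div, abs_of_pos two_mul_sinh_half_pos, Real.abs_sinh,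
    div_le_iff₀ two_mul_sinh_half_pos, ← mul_assoc, one_div_mul_cancel two_ne_zero,
    one_mul]
  exact Real.sinh_le_sinh.2 abs_fract_sub_half_le

lemma measurable_circleGreenDeriv : Measurable circleGreenDeriv :=
  (Real.measurable_sinh.comp (measurable_fract.sub_const _)).div_const _

lemma integrable_circleGreenDeriv_sub_mul {μ : Measure ℝ} {f : ℝ → ℝ} (hf : Integrable f μ)
    (x : ℝ) : Integrable (fun y => circleGreenDeriv (x - y) * f y) μ :=
  have measurable_kernel : Measurable fun y => circleGreenDeriv (x - y) :=
    measurable_circleGreenDeriv.comp (measurable_id.const_sub x)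
  hf.bdd_mul measurable_kernel.aestronglyMeasurable
    (ae_of_all _ fun y => abs_circleGreenDeriv_le (x - y))

theorem S_ab_properties_circle_general {a b : ℝ} (hab : a < b) {S : ℝ → ℝ}
    (hS : ∀ y, S y = circleGreenDeriv (b - y) - circleGreenDeriv (a - y)) :
    (∀ y : ℝ, (∀ n : ℤ, y + n ∉ Set.Ioc a b) → 0 < S y) ∧
    (∀ (μ : Measure ℝ) [NullSingletonClass μ] (f : ℝ → ℝ), Integrable f μ →
      ∀ g' : ℝ → ℝ, (∀ z : ℝ, (∀ n : ℤ, z ≠ n) → g' z = circleGreenDeriv z) →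
        ∀ F : ℝ → ℝ, (∀ x, F x = ∫ y, g' (x - y) * f y ∂μ) →
          F b - F a = ∫ y, S y * f y ∂μ) := by
  refine ⟨fun y hy => ?_, fun μ _ f hf g' hg' F hF => ?_⟩
  · rw [hS, sub_pos]
    exact circleGreenDeriv_sub_lt_circleGreenDeriv_sub hab hy
  · calc F b - F a
        = (∫ y, circleGreenDeriv (b - y) * f y ∂μ) - ∫ y, circleGreenDeriv (a - y) * f y ∂μ := by
          rw [hF, hF, integral_sub_mul_congr_off_intCast hg',
            integral_sub_mul_congr_off_intCast hg']
      _ = ∫ y, (circleGreenDeriv (b - y) * f y - circleGreenDeriv (a - y) * f y) ∂μ :=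
          (integral_sub (integrable_circleGreenDeriv_sub_mul hf b)
            (integrable_circleGreenDeriv_sub_mul hf a)).symm
      _ = ∫ y, S y * f y ∂μ := by simp only [hS, sub_mul]

/-- **Lemma 3.4 (periodic case).** For `0 ≤ a < b < 1`, the function
`S_{a,b}(y) = [sinh(b-y-⌊b-y⌋-1/2) - sinh(a-y-⌊a-y⌋-1/2)]/(2 sinh(1/2))` is strictly positive
on `[0,1) \ [a,b]`, and for every continuous non-negative `1`-periodic `f`, with
`F(x) = ∫_{[0,1)} g'(x-y) f(y) dy` one has `F(b) - F(a) = ∫_{[0,1)} S_{a,b}(y) f(y) dy`. -/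
theorem S_ab_properties_circle
    (a b : ℝ) (ha : 0 ≤ a) (hab : a < b) (hb : b < 1)
    (S : ℝ → ℝ)
    (hS : ∀ y, S y = (Real.sinh (b - y - (⌊b - y⌋ : ℝ) - 1/2)
      - Real.sinh (a - y - (⌊a - y⌋ : ℝ) - 1/2)) / (2 * Real.sinh (1/2))) :
    (∀ y : ℝ, y ∈ Set.Ico (0:ℝ) 1 \ Set.Icc a b → 0 < S y) ∧
    (∀ f : ℝ → ℝ, Continuous f → (∀ x, 0 ≤ f x) → (∀ x, f (x + 1) = f x) →
      ∀ g' : ℝ → ℝ,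
        (∀ n : ℤ, g' (n : ℝ) = 0) →
        (∀ z : ℝ, (∀ n : ℤ, z ≠ (n : ℝ)) →
          g' z = Real.sinh (z - (⌊z⌋ : ℝ) - 1/2) / (2 * Real.sinh (1/2))) →
        ∀ F : ℝ → ℝ,
          (∀ x, F x = ∫ y in Set.Ico (0:ℝ) 1, g' (x - y) * f y) →
          F b - F a = ∫ y in Set.Ico (0:ℝ) 1, S y * f y) := by
  obtain ⟨S_pos, F_sub⟩ := S_ab_properties_circle_general hab fun y => (hS y).trans (sub_div _ _ _)
  refine ⟨fun y ⟨hy, hyab⟩ => S_pos y (add_intCast_notMem_Ioc ha hb hy fun h =>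
    hyab (Set.Ioc_subset_Icc_self h)), fun f hf _ _ g' _ => F_sub _ f ?_ g'⟩
  exact hf.integrableOn_Icc.mono_set Set.Ico_subset_Icc_self
end

section
/- Let u, ρ : [0,T)×ℝ → ℝ be such that for each t ∈ [0,T), x ↦ u(t,x) is continuously differentiable, x ↦ ρ(t,x) is continuous, x ↦ u(t,x), x ↦ u_x(t,x), x ↦ ρ(t,x) are square-integrable, f_t(x) := u(t,x)² + (1/2)u_x(t,x)² + (1/2)ρ(t,x)² is integrable, and the Hamiltonian H(t) := (1/2)∫_ℝ (u(t,x)² + u_x(t,x)² + ρ(t,x)²) dx satisfies H(t) = H(0) for all t ∈ [0,T). Define F_t(x) := ∫_ℝ (−(1/2)·sgn(x−y)·e^{−|x−y|}) f_t(y) dy. If there exist t* ∈ (0,T) and x₀ < x₁ such that f_{t*}(x) = 0 for all x ∈ (x₀,x₁) and F_{t*}(x₀) = F_{t*}(x₁), then for all t ∈ [0,T): F_t(x) = 0 and f_t(x) = 0 for all x ∈ ℝ, and u(t,x) = 0 and ρ(t,x) = 0 for all x ∈ ℝ. -/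
open MeasureTheory

/-!
The kernel `∂ₓg(x) = -½ sgn(x) e^{-|x|}` increases strictly on each side of its jump at `0`.
Hence for `x₀ < x₁` and `y ∉ [x₀, x₁]`, where `x₀ - y` and `x₁ - y` have the same sign,
`∂ₓg(x₁ - y) - ∂ₓg(x₀ - y) > 0`. If `f ≥ 0` vanishes on `(x₀, x₁)`, then `F(x₁) - F(x₀)` is the
integral of `f` against this positive weight, so `F(x₁) ≤ F(x₀)` forces `f = 0`. At time `t*` this
makes the Hamiltonian vanish, and conservation carries the vanishing to all other times.
-/

open Set

theorem ae_eq_zero_of_integral_mul_nonpos {α : Type*} [MeasurableSpace α] {μ : Measure α}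
    {w h : α → ℝ} (hh : 0 ≤ᵐ[μ] h) (hw : ∀ᵐ a ∂μ, h a = 0 ∨ 0 < w a)
    (hint : Integrable (fun a => w a * h a) μ) (hle : ∫ a, w a * h a ∂μ ≤ 0) :
    h =ᵐ[μ] 0 := by
  have hnonneg : 0 ≤ᵐ[μ] fun a => w a * h a := by
    filter_upwards [hh, hw] with a ha hwa
    rcases hwa with hzero | hpos
    · simp [hzero]
    · exact mul_nonneg hpos.le ha
  have hprod : (fun a => w a * h a) =ᵐ[μ] 0 :=
    (integral_eq_zero_iff_of_nonneg_ae hnonneg hint).1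
      (hle.antisymm (integral_nonneg_of_ae hnonneg))
  filter_upwards [hprod, hw] with a ha hwa
  exact hwa.elim id fun hpos => (mul_eq_zero.1 ha).resolve_left hpos.ne'

section GreenKernel

/-- The derivative `∂ₓg` of the Green function `g(x) = ½ e^{-|x|}` of `1 - ∂ₓ²`, with the value `0`
at the jump. -/
noncomputable def greenDeriv (x : ℝ) : ℝ :=
  -(1 / 2) * Real.sign x * Real.exp (-|x|)

/-- The operator `∂ₓΛ⁻²`, that is, convolution with `greenDeriv`. -/
noncomputable def greenDerivConv (h : ℝ → ℝ) (x : ℝ) : ℝ :=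
  ∫ y, greenDeriv (x - y) * h y

theorem greenDeriv_of_neg {x : ℝ} (hx : x < 0) : greenDeriv x = 1 / 2 * Real.exp x := by
  simp [greenDeriv, Real.sign_of_neg hx, abs_of_neg hx]

theorem greenDeriv_of_pos {x : ℝ} (hx : 0 < x) : greenDeriv x = -(1 / 2) * Real.exp (-x) := by
  simp [greenDeriv, Real.sign_of_pos hx, abs_of_pos hx]

theorem strictMonoOn_greenDeriv_Iio : StrictMonoOn greenDeriv (Iio 0) := by
  intro a ha b hb hab
  rw [greenDeriv_of_neg ha, greenDeriv_of_neg hb]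
  gcongr

theorem strictMonoOn_greenDeriv_Ioi : StrictMonoOn greenDeriv (Ioi 0) := by
  intro a ha b hb hab
  have hexp : Real.exp (-b) < Real.exp (-a) := Real.exp_lt_exp.2 (neg_lt_neg hab)
  rw [greenDeriv_of_pos ha, greenDeriv_of_pos hb]
  linarith

theorem greenDeriv_sub_lt_greenDeriv_sub {x₀ x₁ y : ℝ} (hx : x₀ < x₁) (hy : y ∉ Icc x₀ x₁) :
    greenDeriv (x₀ - y) < greenDeriv (x₁ - y) := by
  have hlt : x₀ - y < x₁ - y := sub_lt_sub_right hx y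
  rcases lt_or_ge y x₀ with hleft | hright
  · have hpos : 0 < x₀ - y := sub_pos.2 hleft
    exact strictMonoOn_greenDeriv_Ioi hpos (hpos.trans hlt) hlt
  · have hneg : x₁ - y < 0 := sub_neg.2 (not_le.1 fun hle => hy ⟨hright, hle⟩)
    exact strictMonoOn_greenDeriv_Iio (hlt.trans hneg) hneg hlt

theorem measurable_greenDeriv : Measurable greenDeriv := by
  have hsign : Measurable Real.sign :=
    Measurable.ite measurableSet_Iio measurable_const
      (Measurable.ite measurableSet_Ioi measurable_const measurable_const)
  unfold greenDeriv
  fun_prop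

theorem abs_greenDeriv_le (x : ℝ) : |greenDeriv x| ≤ 1 / 2 := by
  have hsign : |Real.sign x| ≤ 1 := by
    rcases Real.sign_apply_eq x with hx | hx | hx <;> simp [hx]
  have hexp : Real.exp (-|x|) ≤ 1 := Real.exp_le_one_iff.2 (neg_nonpos.2 (abs_nonneg x))
  calc |greenDeriv x| = 1 / 2 * (|Real.sign x| * Real.exp (-|x|)) := by
        simp [greenDeriv, abs_mul, mul_assoc]
    _ ≤ 1 / 2 * (1 * 1) := by gcongr
    _ = 1 / 2 := by norm_num

theorem integrable_greenDeriv_sub_mul {h : ℝ → ℝ} (hh : Integrable h) (x : ℝ) :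
    Integrable fun y => greenDeriv (x - y) * h y :=
  hh.bdd_mul (measurable_greenDeriv.comp (measurable_const.sub measurable_id)).aestronglyMeasurable
    (.of_forall fun y => abs_greenDeriv_le (x - y))

theorem greenDerivConv_sub {h : ℝ → ℝ} (hh : Integrable h) (x₀ x₁ : ℝ) :
    greenDerivConv h x₁ - greenDerivConv h x₀ =
      ∫ y, (greenDeriv (x₁ - y) - greenDeriv (x₀ - y)) * h y := by
  simp only [sub_mul]
  exact (integral_sub (integrable_greenDeriv_sub_mul hh x₁)
    (integrable_greenDeriv_sub_mul hh x₀)).symm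

theorem ae_eq_zero_of_greenDerivConv_le {h : ℝ → ℝ} (hint : Integrable h)
    (hnonneg : 0 ≤ᵐ[volume] h) {x₀ x₁ : ℝ} (hx : x₀ < x₁) (hvan : ∀ᵐ y, y ∈ Ioo x₀ x₁ → h y = 0)
    (hle : greenDerivConv h x₁ ≤ greenDerivConv h x₀) :
    h =ᵐ[volume] 0 := by
  have hweight : ∀ᵐ y, h y = 0 ∨ 0 < greenDeriv (x₁ - y) - greenDeriv (x₀ - y) := by
    filter_upwards [hvan, (Ioo_ae_eq_Icc (a := x₀) (b := x₁) (μ := volume)).mem_iff]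
      with y hy hmem
    by_cases hyIcc : y ∈ Icc x₀ x₁
    · exact .inl (hy (hmem.2 hyIcc))
    · exact .inr (sub_pos.2 (greenDeriv_sub_lt_greenDeriv_sub hx hyIcc))
  refine ae_eq_zero_of_integral_mul_nonpos hnonneg hweight ?_ ?_
  · simp only [sub_mul]
    exact (integrable_greenDeriv_sub_mul hint x₁).sub (integrable_greenDeriv_sub_mul hint x₀)
  · rw [← greenDerivConv_sub hint]
    exact sub_nonpos.2 hle

end GreenKernel

section Energy

variable {v r : ℝ → ℝ}

/-- The density `f = u² + ½uₓ² + ½ρ²` of the nonlocal term of the CH2 system, for a velocity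
profile `v` and a density profile `r`. -/
noncomputable def energyDensity (v r : ℝ → ℝ) (x : ℝ) : ℝ :=
  v x ^ 2 + (1 / 2) * deriv v x ^ 2 + (1 / 2) * r x ^ 2

/-- The Hamiltonian of the CH2 system, for a velocity profile `v` and a density profile `r`. The
integral has the junk value `0` for a non-integrable integrand, so statements about it assume
`HasFiniteEnergy v r`. -/
noncomputable def hamiltonian (v r : ℝ → ℝ) : ℝ :=
  (1 / 2) * ∫ x, (v x ^ 2 + deriv v x ^ 2 + r x ^ 2)

/-- Profiles with each of the three terms of the Hamiltonian integrable. -/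
structure HasFiniteEnergy (v r : ℝ → ℝ) : Prop where
  integrable_sq_velocity : Integrable fun x => v x ^ 2
  integrable_sq_deriv : Integrable fun x => deriv v x ^ 2
  integrable_sq_density : Integrable fun x => r x ^ 2

theorem energyDensity_nonneg (v r : ℝ → ℝ) : 0 ≤ energyDensity v r := fun x => by
  simp only [Pi.zero_apply, energyDensity]
  positivity

theorem HasFiniteEnergy.integrable_energyDensity (hE : HasFiniteEnergy v r) :
    Integrable (energyDensity v r) :=
  (hE.integrable_sq_velocity.add (hE.integrable_sq_deriv.const_mul _)).add
    (hE.integrable_sq_density.const_mul _)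

theorem HasFiniteEnergy.integrable_sum_sq (hE : HasFiniteEnergy v r) :
    Integrable fun x => v x ^ 2 + deriv v x ^ 2 + r x ^ 2 :=
  (hE.integrable_sq_velocity.add hE.integrable_sq_deriv).add hE.integrable_sq_density

theorem HasFiniteEnergy.hamiltonian_le_integral_energyDensity (hE : HasFiniteEnergy v r) :
    hamiltonian v r ≤ ∫ x, energyDensity v r x := by
  rw [hamiltonian, ← integral_const_mul]
  refine integral_mono (hE.integrable_sum_sq.const_mul _) hE.integrable_energyDensity fun x => ?_
  simp only [energyDensity]
  linarith [sq_nonneg (v x)]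

theorem HasFiniteEnergy.eq_zero_of_hamiltonian_nonpos (hE : HasFiniteEnergy v r)
    (hv : Continuous v) (hr : Continuous r) (hH : hamiltonian v r ≤ 0) : v = 0 ∧ r = 0 := by
  have hnonneg : 0 ≤ fun x => v x ^ 2 + deriv v x ^ 2 + r x ^ 2 := fun x => by
    simp only [Pi.zero_apply]
    positivity
  have hintegral : ∫ x, (v x ^ 2 + deriv v x ^ 2 + r x ^ 2) = 0 := by
    rw [hamiltonian] at hH
    linarith [integral_nonneg (μ := volume) hnonneg]
  have hsum := (integral_eq_zero_iff_of_nonneg hnonneg hE.integrable_sum_sq).1 hintegral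
  have hpointwise : ∀ᵐ x, v x = 0 ∧ r x = 0 := by
    filter_upwards [hsum] with x hx
    simp only [Pi.zero_apply] at hx
    constructor <;> refine pow_eq_zero_iff two_ne_zero |>.1 ?_ <;>
      linarith [sq_nonneg (v x), sq_nonneg (deriv v x), sq_nonneg (r x)]
  exact ⟨(hv.ae_eq_iff_eq volume continuous_zero).1 (hpointwise.mono fun _ hx => hx.1),
    (hr.ae_eq_iff_eq volume continuous_zero).1 (hpointwise.mono fun _ hx => hx.2)⟩

end Energy

theorem ch2_theorem31_general {τ : Type*} {S : Set τ} {u ρ : τ → ℝ → ℝ}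
    (hu : ∀ t ∈ S, Differentiable ℝ (u t)) (hρ : ∀ t ∈ S, Continuous (ρ t))
    (hE : ∀ t ∈ S, HasFiniteEnergy (u t) (ρ t)) {s : τ} (hs : s ∈ S)
    (hH : ∀ t ∈ S, hamiltonian (u t) (ρ t) ≤ hamiltonian (u s) (ρ s))
    {x₀ x₁ : ℝ} (hx : x₀ < x₁)
    (hvan : ∀ᵐ x, x ∈ Ioo x₀ x₁ → energyDensity (u s) (ρ s) x = 0)
    (hF : greenDerivConv (energyDensity (u s) (ρ s)) x₁ ≤
      greenDerivConv (energyDensity (u s) (ρ s)) x₀) :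
    ∀ t ∈ S, ∀ x : ℝ, greenDerivConv (energyDensity (u t) (ρ t)) x = 0 ∧
      energyDensity (u t) (ρ t) x = 0 ∧ u t x = 0 ∧ ρ t x = 0 := by
  intro t ht x
  have hf : energyDensity (u s) (ρ s) =ᵐ[volume] 0 :=
    ae_eq_zero_of_greenDerivConv_le (hE s hs).integrable_energyDensity
      (.of_forall (energyDensity_nonneg _ _)) hx hvan hF
  have hHt : hamiltonian (u t) (ρ t) ≤ 0 :=
    calc hamiltonian (u t) (ρ t) ≤ hamiltonian (u s) (ρ s) := hH t ht
      _ ≤ ∫ x, energyDensity (u s) (ρ s) x := (hE s hs).hamiltonian_le_integral_energyDensity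
      _ = 0 := integral_eq_zero_of_ae hf
  obtain ⟨hut, hρt⟩ :=
    (hE t ht).eq_zero_of_hamiltonian_nonpos (hu t ht).continuous (hρ t ht) hHt
  simp [greenDerivConv, energyDensity, hut, hρt]

/-- **Theorem 3.1.** Suppose the Hamiltonian is conserved. If for some `t* ∈ (0,T)` and
`x₀ < x₁` the energy density `f_{t*}` vanishes on `(x₀,x₁)` and `F_{t*}(x₀) = F_{t*}(x₁)`,
then `F_t ≡ 0`, `f_t ≡ 0`, `u(t,·) ≡ 0` and `ρ(t,·) ≡ 0` for every `t ∈ [0,T)`. -/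
theorem ch2_theorem31
    (T : ℝ) (hT : 0 < T)
    (u ρ : ℝ → ℝ → ℝ)
    (hu_reg : ∀ t ∈ Set.Ico (0:ℝ) T, ContDiff ℝ 1 (u t))
    (hρ_reg : ∀ t ∈ Set.Ico (0:ℝ) T, Continuous (ρ t))
    (hu_L2 : ∀ t ∈ Set.Ico (0:ℝ) T, Integrable (fun x => (u t x)^2))
    (hux_L2 : ∀ t ∈ Set.Ico (0:ℝ) T, Integrable (fun x => (deriv (u t) x)^2))
    (hρ_L2 : ∀ t ∈ Set.Ico (0:ℝ) T, Integrable (fun x => (ρ t x)^2))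
    (f : ℝ → ℝ → ℝ)
    (hf : ∀ t x, f t x = (u t x)^2 + (1/2) * (deriv (u t) x)^2 + (1/2) * (ρ t x)^2)
    (hf_int : ∀ t ∈ Set.Ico (0:ℝ) T, Integrable (f t))
    (H : ℝ → ℝ)
    (hH : ∀ t, H t = (1/2) * ∫ x, ((u t x)^2 + (deriv (u t) x)^2 + (ρ t x)^2))
    (hcons : ∀ t ∈ Set.Ico (0:ℝ) T, H t = H 0)
    (F : ℝ → ℝ → ℝ)
    (hF : ∀ t x, F t x = ∫ y, (-(1/2) * Real.sign (x - y) * Real.exp (-|x - y|)) * f t y)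
    (tstar : ℝ) (htstar : tstar ∈ Set.Ioo 0 T)
    (x₀ x₁ : ℝ) (hx01 : x₀ < x₁)
    (hvan : ∀ x ∈ Set.Ioo x₀ x₁, f tstar x = 0)
    (hFF : F tstar x₀ = F tstar x₁) :
    ∀ t ∈ Set.Ico (0:ℝ) T, ∀ x : ℝ,
      F t x = 0 ∧ f t x = 0 ∧ u t x = 0 ∧ ρ t x = 0 := by
  obtain rfl : f = fun t => energyDensity (u t) (ρ t) := funext₂ hf
  obtain rfl : H = fun t => hamiltonian (u t) (ρ t) := funext hH
  obtain rfl : F = fun t => greenDerivConv (energyDensity (u t) (ρ t)) := funext₂ hF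
  have hstar : tstar ∈ Set.Ico 0 T := Set.Ioo_subset_Ico_self htstar
  exact ch2_theorem31_general (fun t ht => (hu_reg t ht).differentiable one_ne_zero) hρ_reg
    (fun t ht => ⟨hu_L2 t ht, hux_L2 t ht, hρ_L2 t ht⟩) hstar
    (fun t ht => ((hcons t ht).trans (hcons tstar hstar).symm).le) hx01 (.of_forall hvan) hFF.ge
end

section
/- Let f : ℝ → ℝ be continuous, non-negative, and 1-periodic, and define F(x) := ∫_{[0,1)} g'(x−y) f(y) dy, where g'(z) := sinh(z − ⌊z⌋ − 1/2)/(2·sinh(1/2)) for z ∉ ℤ and g'(z) := 0 for z ∈ ℤ. If there exist a, b ∈ ℝ with 0 ≤ a < b < 1 such that f(x) = 0 for all x ∈ (a,b) and F(a) = F(b), then f(x) = 0 for all x ∈ ℝ. -/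
open MeasureTheory

open Set Function

/-!
By periodicity `F b - F a` is the integral of `(g' (b - y) - g' (a - y)) * f y` over the period
`(a, a + 1]`. The jump of the kernel occurs only where `f` vanishes: for `y ∈ (b, a + 1)` both
`a - y` and `b - y` lie in `(-1, 0)`, a single branch on which `g'` is strictly increasing. So the
integrand is non-negative, and its integral can vanish only if `f` does.
-/

theorem strictMonoOn_Ioo_neg_of_periodic {G α : Type*} [AddCommGroup G] [PartialOrder G]
    [IsOrderedAddMonoid G] [Preorder α] {k : G → α} {c : G} (hper : Periodic k c)
    (hmono : StrictMonoOn k (Ioo 0 c)) : StrictMonoOn k (Ioo (-c) 0) := by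
  have add_mem : ∀ x ∈ Ioo (-c) 0, x + c ∈ Ioo 0 c := fun x hx ↦
    ⟨neg_lt_iff_pos_add.1 hx.1, add_lt_of_neg_left c hx.2⟩
  intro x hx y hy hxy
  rw [← hper x, ← hper y]
  exact hmono (add_mem x hx) (add_mem y hy) (by gcongr)

theorem ae_of_periodic_of_ae_restrict_Ioc {p : ℝ → Prop} {T : ℝ} (hp : Periodic p T) (hT : 0 < T)
    {a : ℝ} (h : ∀ᵐ x ∂volume.restrict (Ioc a (a + T)), p x) : ∀ᵐ x, p x := by
  refine (isAddFundamentalDomain_Ioc hT a).measure_zero_of_invariant {x | ¬p x} ?_ ?_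
  · rintro ⟨_, n, rfl⟩
    ext x
    have hpx : p (-(n * T) + x) = p x := by rw [neg_add_eq_sub, hp.sub_int_mul_eq]
    simp [mem_vadd_set_iff_neg_vadd_mem, AddSubgroup.vadd_def, hpx]
  · rwa [ae_iff, Measure.restrict_apply₀'] at h
    exact measurableSet_Ioc.nullMeasurableSet

theorem ae_eq_zero_of_integral_mul_eq_zero {α : Type*} [MeasurableSpace α] {μ : Measure α}
    {w f : α → ℝ} (hf : 0 ≤ᵐ[μ] f) (hw : ∀ᵐ x ∂μ, f x = 0 ∨ 0 < w x)
    (h_int : Integrable (fun x ↦ w x * f x) μ) (h_zero : ∫ x, w x * f x ∂μ = 0) :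
    f =ᵐ[μ] 0 := by
  have hnonneg : 0 ≤ᵐ[μ] fun x ↦ w x * f x := by
    filter_upwards [hf, hw] with x hfx hwx
    rcases hwx with hfx0 | hwx
    · simp [hfx0]
    · exact mul_nonneg hwx.le hfx
  filter_upwards [(integral_eq_zero_iff_of_nonneg_ae hnonneg h_int).1 h_zero, hw] with x hx hwx
  exact hwx.elim id fun hwx ↦ (mul_eq_zero.1 hx).resolve_left hwx.ne'

theorem ch2_theorem32_circle_general {f k : ℝ → ℝ} {T : ℝ} (hT : 0 < T) (hf_per : Periodic f T)
    (hf_nonneg : 0 ≤ᵐ[volume] f) (hk_per : Periodic k T) (hk_mono : StrictMonoOn k (Ioo 0 T))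
    {a b : ℝ} (hab : a < b)
    (h_int_a : IntegrableOn (fun y ↦ k (a - y) * f y) (Ico 0 T))
    (h_int_b : IntegrableOn (fun y ↦ k (b - y) * f y) (Ico 0 T))
    (hvan : f =ᵐ[volume.restrict (Ioo a b)] 0)
    (h_eq : ∫ y in Ico 0 T, k (a - y) * f y = ∫ y in Ico 0 T, k (b - y) * f y) :
    f =ᵐ[volume] 0 := by
  have haT : a ≤ a + T := by linarith
  let d : ℝ → ℝ := fun y ↦ (k (b - y) - k (a - y)) * f y
  have hd_per : Periodic d T := ((hk_per.const_sub b).sub (hk_per.const_sub a)).mul hf_per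
  have hd_int : IntegrableOn d (Ioc a (a + T)) := by
    refine (intervalIntegrable_iff_integrableOn_Ioc_of_le haT).1
      (hd_per.intervalIntegrable₀ hT.ne' ?_ _ _)
    rw [intervalIntegrable_iff_integrableOn_Ico_of_le hT.le]
    simpa only [d, sub_mul] using! h_int_b.sub h_int_a
  have hd_zero : ∫ y in Ioc a (a + T), d y = 0 := by
    rw [← intervalIntegral.integral_of_le haT, hd_per.intervalIntegral_add_eq a 0, zero_add,
      intervalIntegral.integral_of_le hT.le, ← integral_Ico_eq_integral_Ioc]
    simp only [d, sub_mul]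
    rw [integral_sub h_int_b h_int_a, h_eq, sub_self]
  have hk_lt : ∀ y ∈ Ioo b (a + T), k (a - y) < k (b - y) := fun y hy ↦
    strictMonoOn_Ioo_neg_of_periodic hk_per hk_mono ⟨by linarith [hy.2], by linarith [hy.1]⟩
      ⟨by linarith [hy.2], by linarith [hy.1]⟩ (by gcongr)
  have hd_weight : ∀ᵐ y ∂volume.restrict (Ioc a (a + T)), f y = 0 ∨ 0 < k (b - y) - k (a - y) := by
    filter_upwards [ae_restrict_mem measurableSet_Ioc,
      ae_restrict_of_ae ((ae_restrict_iff' measurableSet_Ioo).1 hvan),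
      Measure.ae_ne _ b, Measure.ae_ne _ (a + T)] with y hy hvan_y hyb hyT
    rcases hyb.lt_or_gt with hyb | hby
    · exact .inl (hvan_y ⟨hy.1, hyb⟩)
    · exact .inr (sub_pos.2 (hk_lt y ⟨hby, hy.2.lt_of_ne hyT⟩))
  exact ae_of_periodic_of_ae_restrict_Ioc (hf_per.comp (· = 0)) hT
    (ae_eq_zero_of_integral_mul_eq_zero (ae_restrict_of_ae hf_nonneg) hd_weight hd_int hd_zero)

/-- The derivative of the `1`-periodic Green function of `1 - ∂ₓ²`, written `g'` in the theorem. The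
value `0` at the integers is the mean of the one-sided limits `±1/2` at the jump. -/
noncomputable def helmholtzGreenDeriv (z : ℝ) : ℝ :=
  if Int.fract z = 0 then 0 else Real.sinh (Int.fract z - 1 / 2) / (2 * Real.sinh (1 / 2))

theorem eq_helmholtzGreenDeriv {g' : ℝ → ℝ} (h_int : ∀ n : ℤ, g' n = 0)
    (h_nonint : ∀ z : ℝ, (∀ n : ℤ, z ≠ n) →
      g' z = Real.sinh (z - ⌊z⌋ - 1 / 2) / (2 * Real.sinh (1 / 2))) :
    g' = helmholtzGreenDeriv := by
  funext z
  rw [helmholtzGreenDeriv]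
  split_ifs with hz
  · obtain ⟨n, rfl⟩ := Int.fract_eq_zero_iff.1 hz
    exact h_int n
  · exact h_nonint z fun n hn ↦ hz (hn ▸ Int.fract_intCast n)

theorem sinh_half_pos : 0 < Real.sinh (1 / 2) := Real.sinh_pos_iff.2 (by norm_num)

theorem periodic_helmholtzGreenDeriv : Periodic helmholtzGreenDeriv 1 := fun z ↦ by
  simp only [helmholtzGreenDeriv, Int.fract_add_one]

theorem strictMonoOn_helmholtzGreenDeriv : StrictMonoOn helmholtzGreenDeriv (Ioo 0 1) := by
  have eq_sinh : ∀ z ∈ Ioo (0 : ℝ) 1,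
      helmholtzGreenDeriv z = Real.sinh (z - 1 / 2) / (2 * Real.sinh (1 / 2)) := fun z hz ↦ by
    rw [helmholtzGreenDeriv, Int.fract_eq_self.2 ⟨hz.1.le, hz.2⟩, if_neg hz.1.ne']
  intro x hx y hy hxy
  rw [eq_sinh x hx, eq_sinh y hy]
  have := sinh_half_pos
  gcongr
  exact Real.sinh_lt_sinh.2 (by gcongr)

theorem measurable_helmholtzGreenDeriv : Measurable helmholtzGreenDeriv :=
  .ite (measurable_fract (measurableSet_singleton 0)) measurable_const
    ((Real.measurable_sinh.comp (measurable_fract.sub_const _)).div_const _)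

theorem abs_helmholtzGreenDeriv_le (z : ℝ) : |helmholtzGreenDeriv z| ≤ 1 / 2 := by
  rw [helmholtzGreenDeriv]
  split_ifs
  · norm_num
  have hfract : |Int.fract z - 1 / 2| ≤ 1 / 2 :=
    abs_le.2 ⟨by linarith [Int.fract_nonneg z], by linarith [Int.fract_lt_one z]⟩
  have hpos : 0 < 2 * Real.sinh (1 / 2) := mul_pos two_pos sinh_half_pos
  rw [abs_div, Real.abs_sinh, abs_of_pos hpos, div_le_iff₀ hpos]
  linarith [Real.sinh_le_sinh.2 hfract]

theorem integrable_helmholtzGreenDeriv_sub_mul {f : ℝ → ℝ} {μ : Measure ℝ} (hf : Integrable f μ)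
    (x : ℝ) : Integrable (fun y ↦ helmholtzGreenDeriv (x - y) * f y) μ :=
  hf.bdd_mul (measurable_helmholtzGreenDeriv.comp (measurable_id.const_sub x)).aestronglyMeasurable
    (.of_forall fun y ↦ abs_helmholtzGreenDeriv_le (x - y))

/-- **Theorem 3.2 (periodic case).** Let `f` be continuous, non-negative and `1`-periodic,
and `F(x) = ∫_{[0,1)} g'(x-y) f(y) dy` with `g'(z) = sinh(z-⌊z⌋-1/2)/(2 sinh(1/2))` off the
integers. If `f` vanishes on some arc `(a,b)` with `0 ≤ a < b < 1` and `F(a) = F(b)`, then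
`f` vanishes identically. -/
theorem ch2_theorem32_circle
    (f : ℝ → ℝ) (hf_cont : Continuous f) (hf_nonneg : ∀ x, 0 ≤ f x)
    (hf_per : ∀ x, f (x + 1) = f x)
    (g' : ℝ → ℝ)
    (hg'_int : ∀ n : ℤ, g' (n : ℝ) = 0)
    (hg'_nonint : ∀ z : ℝ, (∀ n : ℤ, z ≠ (n : ℝ)) →
      g' z = Real.sinh (z - (⌊z⌋ : ℝ) - 1/2) / (2 * Real.sinh (1/2)))
    (F : ℝ → ℝ)
    (hF : ∀ x, F x = ∫ y in Set.Ico (0:ℝ) 1, g' (x - y) * f y)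
    (a b : ℝ) (ha : 0 ≤ a) (hab : a < b) (hb : b < 1)
    (hvan : ∀ x ∈ Set.Ioo a b, f x = 0)
    (hFab : F a = F b) :
    ∀ x : ℝ, f x = 0 := by
  obtain rfl := eq_helmholtzGreenDeriv hg'_int hg'_nonint
  have hf_int : IntegrableOn f (Ico 0 1) := hf_cont.integrableOn_Icc.mono_set Ico_subset_Icc_self
  exact congrFun <| (hf_cont.ae_eq_iff_eq volume continuous_zero).1 <|
    ch2_theorem32_circle_general one_pos hf_per (.of_forall hf_nonneg)
      periodic_helmholtzGreenDeriv strictMonoOn_helmholtzGreenDeriv hab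
      (integrable_helmholtzGreenDeriv_sub_mul hf_int a)
      (integrable_helmholtzGreenDeriv_sub_mul hf_int b)
      (ae_restrict_of_forall_mem measurableSet_Ioo hvan) (by rw [← hF, ← hF, hFab])
end
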